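/- arXiv:1708.01607 — 2 statements merged into one kernel-verified Lean document; each statement's English description precedes it below -/
import Mathlib

section
/- For all k ≥ r ≥ 3, α(k, r) ≥ k(2r - 4); moreover α(k, r) ≤ (k-1)(4r - k - 6) when r ≤ k ≤ 2r-3, and α(k, r) ≤ (k-1)(2r - 3) when k ≥ 2r - 3. -/
open SimpleGraph

/-- `n` is the number of vertices of a `K_r`-free `k`-partite graph in which
the subgraph induced by any `k - i` parts contains a clique of size `r - 1`. -/
def BetaWitness (i k r n : ℕ) : Prop :=
  ∃ (G : SimpleGraph (Fin n)) (P : Fin n → Fin k),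
    (∀ u v, G.Adj u v → P u ≠ P v) ∧ G.CliqueFree r ∧
    ∀ S : Finset (Fin k), S.card = i →
      ∃ T : Finset (Fin n), G.IsNClique (r - 1) T ∧ ∀ v ∈ T, P v ∉ S

noncomputable def beta (i k r : ℕ) : ℕ := sInf {n | BetaWitness i k r n}

/-- A `k`-partite graph with partition map `P` is `K_r`-partite-saturated. -/
def PartiteSaturated {V : Type} (k r : ℕ) (G : SimpleGraph V) (P : V → Fin k) : Prop :=
  (∀ u v, G.Adj u v → P u ≠ P v) ∧ G.CliqueFree r ∧
  ∀ u v, P u ≠ P v → ¬ G.Adj u v →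
    ¬ (G ⊔ SimpleGraph.fromEdgeSet {s(u, v)}).CliqueFree r

/-- `m` is the number of edges between an independent transversal `X` and its complement
in a `K_r`-partite-saturated `k`-partite graph. -/
def AlphaWitness (k r m : ℕ) : Prop :=
  ∃ (n : ℕ) (G : SimpleGraph (Fin n)) (P : Fin n → Fin k) (x : Fin k → Fin n),
    PartiteSaturated k r G P ∧ (∀ i, P (x i) = i) ∧
    (∀ i j, ¬ G.Adj (x i) (x j)) ∧
    m = ∑ i : Fin k, (G.neighborSet (x i)).ncard

noncomputable def alpha (k r : ℕ) : ℕ := sInf {m | AlphaWitness k r m}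

/-!
Lower bound: in a saturated graph, adding the missing edge between two vertices `x i` and `x j` of
the transversal completes a `K_r`, so `x i` lies in a `K_{r-1}` whose other vertices are common
neighbours of `x i` and `x j`. As `j` varies, these maximum cliques have only `x i` in common, since
a vertex is not adjacent to the transversal vertex of its own part. Hajnal's lemma then makes their
union contain at least `2(r - 1) - 1` vertices, of which all but `x i` are neighbours of `x i`.

Upper bound: let `H` be `K_{r-1}`-free, such that a `K_{r-2}` survives the deletion of any two
parts. Add an apex to each part, joined to all of `H` outside that part. In every `K_r`-free
supergraph the apexes stay independent, so saturating adds no edge at an apex, and the apexes are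
incident to `(k - 1) |V(H)|` edges. For `H` one starts from the complement of an odd cycle with
singleton parts; a further part, at the cost of three vertices, raises the clique number by one.
-/

section Hajnal

variable {V ι : Type*} [DecidableEq V] {G : SimpleGraph V} {S : Finset ι} {f : ι → Finset V}

lemma inf'_subset_biUnion (hS : S.Nonempty) : S.inf' hS f ⊆ S.biUnion f := by
  obtain ⟨i, hi⟩ := hS
  exact (Finset.inf'_le f hi).trans (Finset.subset_biUnion_of_mem f hi)

lemma isClique_inter_biUnion_union_inf' {A : Finset V} (hA : G.IsClique A) (hS : S.Nonempty)
    (hf : ∀ i ∈ S, G.IsClique (f i)) :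
    G.IsClique ((A ∩ S.biUnion f ∪ S.inf' hS f : Finset V) : Set V) := by
  have adj_of_mem : ∀ u ∈ S.biUnion f, ∀ v ∈ S.inf' hS f, u ≠ v → G.Adj u v := by
    intro u hu v hv huv
    obtain ⟨i, hi, hui⟩ := Finset.mem_biUnion.1 hu
    exact hf i hi hui (Finset.inf'_le f hi hv) huv
  intro u hu v hv huv
  simp only [Finset.mem_coe, Finset.mem_union, Finset.mem_inter] at hu hv
  rcases hu with ⟨huA, hu⟩ | hu <;> rcases hv with ⟨hvA, hv⟩ | hv
  · exact hA huA hvA huv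
  · exact adj_of_mem u hu v hv huv
  · exact (adj_of_mem v hv u hu huv.symm).symm
  · exact adj_of_mem u (inf'_subset_biUnion hS hu) v hv huv

/-- Hajnal's clique collection lemma. -/
theorem two_mul_le_card_inf'_add_card_biUnion {s : ℕ} (hG : G.CliqueFree (s + 1))
    (hS : S.Nonempty) (hf : ∀ i ∈ S, G.IsNClique s (f i)) :
    2 * s ≤ (S.inf' hS f).card + (S.biUnion f).card := by
  classical
  induction hS using Finset.Nonempty.cons_induction with
  | singleton i =>
    have hi := (hf i (Finset.mem_singleton_self i)).card_eq
    simp only [Finset.inf'_singleton, Finset.singleton_biUnion]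
    omega
  | cons i S hiS hS ih =>
    rw [Finset.forall_mem_cons] at hf
    obtain ⟨hi, hf⟩ := hf
    rw [Finset.inf'_cons hS, Finset.cons_eq_insert, Finset.biUnion_insert]
    set I := S.inf' hS f
    set U := S.biUnion f
    have card_clique_le : (f i ∩ U ∪ I).card ≤ s := by
      by_contra! hlt
      exact hG.mono hlt _ ⟨isClique_inter_biUnion_union_inf' hi.isClique hS
        fun j hj => (hf j hj).isClique, rfl⟩
    have inter_eq : f i ∩ U ∩ I = f i ∩ I := by
      rw [Finset.inter_assoc, Finset.inter_eq_right.2 (inf'_subset_biUnion hS)]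
    have card_inter_union := Finset.card_union_add_card_inter (f i ∩ U) I
    have card_union_inter := Finset.card_union_add_card_inter (f i) U
    rw [inter_eq] at card_inter_union
    have := hi.card_eq
    have := ih hf
    change 2 * s ≤ (f i ∩ I).card + (f i ∪ U).card
    omega

end Hajnal

lemma two_mul_le_ncard_neighborSet_of_isNClique {V ι : Type*} [Finite V] {G : SimpleGraph V}
    {S : Finset ι} {f : ι → Finset V} {s : ℕ} {a : V} (hG : G.CliqueFree (s + 2))
    (hS : S.Nonempty) (hf : ∀ i ∈ S, G.IsNClique (s + 1) (f i)) (ha : ∀ i ∈ S, a ∈ f i)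
    (hinter : ∀ v ≠ a, ∃ i ∈ S, v ∉ f i) : 2 * s ≤ (G.neighborSet a).ncard := by
  classical
  have inf_subset : S.inf' hS f ⊆ {a} := by
    intro v hv
    by_contra hva
    obtain ⟨i, hi, hvi⟩ := hinter v (by simpa using hva)
    exact hvi (Finset.inf'_le f hi hv)
  have union_subset : (S.biUnion f : Set V) ⊆ insert a (G.neighborSet a) := by
    intro v hv
    obtain ⟨i, hi, hvi⟩ := Finset.mem_biUnion.1 (Finset.mem_coe.1 hv)
    rcases eq_or_ne v a with rfl | hva
    · exact Set.mem_insert _ _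
    · exact Set.mem_insert_of_mem _ ((hf i hi).isClique (ha i hi) hvi hva.symm)
  have card_inf : (S.inf' hS f).card ≤ 1 := Finset.card_le_card inf_subset
  have card_union : (S.biUnion f).card ≤ (G.neighborSet a).ncard + 1 := by
    rw [← Set.ncard_coe_finset]
    exact (Set.ncard_le_ncard union_subset (Set.toFinite _)).trans (Set.ncard_insert_le _ _)
  have := two_mul_le_card_inf'_add_card_biUnion hG hS hf
  omega

lemma exists_isNClique_of_not_cliqueFree_sup_edge {V : Type*} {G : SimpleGraph V} {n : ℕ}
    {a b : V} (hab : a ≠ b) (hG : G.CliqueFree n)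
    (hGab : ¬ (G ⊔ edge a b).CliqueFree n) :
    ∃ K : Finset V, G.IsNClique (n - 1) K ∧ a ∈ K ∧ ∀ v ∈ K, v ≠ a → G.Adj b v := by
  classical
  obtain ⟨T, hT⟩ := not_forall_not.1 hGab
  have hTba : (G ⊔ edge b a).IsNClique n T := edge_comm a b ▸ hT
  have haT : a ∈ T := hG.mem_of_sup_edge_isNClique hT
  have hbT : b ∈ T := hG.mem_of_sup_edge_isNClique hTba
  refine ⟨T.erase b, hTba.erase_of_sup_edge_of_mem hbT, Finset.mem_erase.2 ⟨hab, haT⟩, ?_⟩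
  intro v hv hva
  obtain ⟨hvb, hvT⟩ := Finset.mem_erase.1 hv
  exact (hT.erase_of_sup_edge_of_mem haT).isClique (Finset.mem_erase.2 ⟨hab.symm, hbT⟩)
    (Finset.mem_erase.2 ⟨hva, hvT⟩) hvb.symm

section Saturated

variable {V : Type} {k s : ℕ} {G : SimpleGraph V} {P : V → Fin k} {x : Fin k → V}

lemma PartiteSaturated.two_mul_le_ncard_neighborSet [Finite V] (hk : 2 ≤ k)
    (hG : PartiteSaturated k (s + 2) G P) (hx : ∀ i, P (x i) = i)
    (hindep : ∀ i j, ¬ G.Adj (x i) (x j)) (i : Fin k) :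
    2 * s ≤ (G.neighborSet (x i)).ncard := by
  classical
  obtain ⟨hP, hfree, hsat⟩ := hG
  have exists_clique : ∀ j ≠ i, ∃ K : Finset V, G.IsNClique (s + 1) K ∧ x i ∈ K ∧
      ∀ v ∈ K, v ≠ x i → G.Adj (x j) v := fun j hj =>
    have hij : P (x i) ≠ P (x j) := by rw [hx, hx]; exact hj.symm
    exists_isNClique_of_not_cliqueFree_sup_edge (ne_of_apply_ne P hij) hfree
      (hsat _ _ hij (hindep i j))
  choose! K hK hxK hadj using exists_clique
  have : Nontrivial (Fin k) := Fin.nontrivial_iff_two_le.2 hk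
  obtain ⟨j, hj⟩ := exists_ne i
  refine two_mul_le_ncard_neighborSet_of_isNClique (S := Finset.univ.erase i) hfree
    ⟨j, Finset.mem_erase.2 ⟨hj, Finset.mem_univ j⟩⟩
    (fun l hl => hK l (Finset.ne_of_mem_erase hl)) (fun l hl => hxK l (Finset.ne_of_mem_erase hl))
    fun v hv => ?_
  by_contra! hall
  replace hall : ∀ l ≠ i, v ∈ K l := fun l hl =>
    hall l (Finset.mem_erase.2 ⟨hl, Finset.mem_univ l⟩)
  have hvi : P v ≠ i := by
    have := hP _ _ ((hK j hj).isClique (hall j hj) (hxK j hj) hv)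
    rwa [hx] at this
  exact hP _ _ (hadj _ hvi v (hall _ hvi) hv) (hx _)

lemma mul_two_mul_le_of_alphaWitness {m : ℕ} (hk : 2 ≤ k) (h : AlphaWitness k (s + 2) m) :
    k * (2 * s) ≤ m := by
  obtain ⟨n, G, P, x, hG, hx, hindep, rfl⟩ := h
  simpa using Finset.card_nsmul_le_sum Finset.univ _ _
    fun i _ => hG.two_mul_le_ncard_neighborSet hk hx hindep i

lemma exists_partiteSaturated_ge [Finite V] {r : ℕ} (hP : ∀ u v, G.Adj u v → P u ≠ P v)
    (hG : G.CliqueFree r) : ∃ G' ≥ G, PartiteSaturated k r G' P := by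
  obtain ⟨G', hle, hmax⟩ := (Set.toFinite {H : SimpleGraph V |
    (∀ u v, H.Adj u v → P u ≠ P v) ∧ H.CliqueFree r}).exists_le_maximal ⟨hP, hG⟩
  refine ⟨G', hle, hmax.prop.1, hmax.prop.2, fun u v huv hnadj hfree => hnadj ?_⟩
  have hpartite : ∀ a b, (G' ⊔ edge u v).Adj a b → P a ≠ P b := by
    intro a b hab
    rcases hab with hab | hab
    · exact hmax.prop.1 a b hab
    · rcases ((edge_adj ..).1 hab).1 with ⟨rfl, rfl⟩ | ⟨rfl, rfl⟩
      exacts [huv, huv.symm]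
  have hadj : (G' ⊔ edge u v).Adj u v :=
    Or.inr ((edge_adj ..).2 ⟨Or.inl ⟨rfl, rfl⟩, ne_of_apply_ne P huv⟩)
  exact hmax.le_of_ge ⟨hpartite, hfree⟩ le_sup_left hadj

lemma PartiteSaturated.comap {W : Type} {r : ℕ} (hG : PartiteSaturated k r G P) (e : W ≃ V) :
    PartiteSaturated k r (G.comap e) (P ∘ e) := by
  obtain ⟨hP, hfree, hsat⟩ := hG
  refine ⟨fun u v => hP (e u) (e v), hfree.comap (Iso.comap e G).isContained,
    fun u v huv hnadj hfree' => hsat (e u) (e v) huv hnadj ?_⟩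
  have comap_sup_edge : (G ⊔ edge (e u) (e v)).comap e = G.comap e ⊔ edge u v := by
    ext a b
    simp [edge_adj]
  exact hfree'.comap (comap_sup_edge ▸ (Iso.comap e (G ⊔ edge (e u) (e v))).symm.isContained)

lemma PartiteSaturated.alphaWitness [Finite V] {r : ℕ} (hG : PartiteSaturated k r G P)
    (hx : ∀ i, P (x i) = i) (hindep : ∀ i j, ¬ G.Adj (x i) (x j)) :
    AlphaWitness k r (∑ i, (G.neighborSet (x i)).ncard) := by
  obtain ⟨n, ⟨e⟩⟩ := Finite.exists_equiv_fin V
  refine ⟨n, G.comap e.symm, P ∘ e.symm, e ∘ x, hG.comap e.symm, by simpa using hx,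
    by simpa using hindep, Finset.sum_congr rfl fun i _ => ?_⟩
  have neighborSet_comap : (G.comap e.symm).neighborSet (e (x i)) = e '' G.neighborSet (x i) := by
    ext w
    simp [e.image_eq_preimage_symm]
  exact (neighborSet_comap ▸ Set.ncard_image_of_injective _ e.injective).symm

end Saturated

section Cone

variable {V ι κ : Type*} {H : SimpleGraph V} {P : V → ι} {c : κ → ι} {s : ℕ}

/-- The partite cone over `H`, whose parts are given by `P`: a new vertex for each `i : κ`, placed
in part `c i`, is joined to the vertices of `H` outside that part. The new vertices are
independent. -/
def partiteCone (H : SimpleGraph V) (P : V → ι) (c : κ → ι) : SimpleGraph (V ⊕ κ) :=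
  (H ⊕g ⊥) ⊔ (completeBipartiteGraph V κ ⊓ (⊤ : SimpleGraph ι).comap (Sum.elim P c))

@[simp] lemma partiteCone_adj_inl_inl {u v : V} :
    (partiteCone H P c).Adj (.inl u) (.inl v) ↔ H.Adj u v := by
  simp [partiteCone]

@[simp] lemma partiteCone_adj_inl_inr {v : V} {i : κ} :
    (partiteCone H P c).Adj (.inl v) (.inr i) ↔ P v ≠ c i := by
  simp [partiteCone]

@[simp] lemma partiteCone_adj_inr_inl {v : V} {i : κ} :
    (partiteCone H P c).Adj (.inr i) (.inl v) ↔ c i ≠ P v := by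
  simp [partiteCone]

@[simp] lemma not_partiteCone_adj_inr_inr {i j : κ} :
    ¬ (partiteCone H P c).Adj (.inr i) (.inr j) := by
  simp [partiteCone]

lemma partiteCone_ne_of_adj (hP : ∀ u v, H.Adj u v → P u ≠ P v) :
    ∀ a b, (partiteCone H P c).Adj a b → Sum.elim P c a ≠ Sum.elim P c b := by
  rintro (u | i) (v | j) h
  · exact hP u v (partiteCone_adj_inl_inl.1 h)
  · simpa only [Sum.elim_inl, Sum.elim_inr] using partiteCone_adj_inl_inr.1 h
  · simpa only [Sum.elim_inl, Sum.elim_inr] using partiteCone_adj_inr_inl.1 h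
  · exact (not_partiteCone_adj_inr_inr h).elim

lemma partiteCone_cliqueFree {n : ℕ} (hH : H.CliqueFree n) :
    (partiteCone H P c).CliqueFree (n + 1) := by
  intro T hT
  have left_isClique : H.IsClique T.toLeft := fun u hu v hv huv =>
    partiteCone_adj_inl_inl.1 <| hT.isClique (Finset.mem_toLeft.1 hu) (Finset.mem_toLeft.1 hv)
      (Sum.inl_injective.ne huv)
  have card_left : T.toLeft.card < n := by
    by_contra! hle
    exact hH.mono hle _ ⟨left_isClique, rfl⟩
  have card_right : T.toRight.card ≤ 1 := Finset.card_le_one.2 fun i hi j hj => by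
    by_contra hij
    exact not_partiteCone_adj_inr_inr <| hT.isClique (Finset.mem_toRight.1 hi)
      (Finset.mem_toRight.1 hj) (Sum.inr_injective.ne hij)
  have := T.card_toLeft_add_card_toRight
  have := hT.card_eq
  omega

lemma isNClique_insert_inr_partiteCone [DecidableEq (V ⊕ κ)] {T : Finset V}
    (hT : H.IsNClique s T) {i : κ} (hi : ∀ v ∈ T, P v ≠ c i) :
    (partiteCone H P c).IsNClique (s + 1) (insert (.inr i) (T.map .inl)) := by
  have map_inl_le : H.map Function.Embedding.inl ≤ partiteCone H P c :=
    (map_le_iff_le_comap _ _ _).2 fun _ _ huv => partiteCone_adj_inl_inl.2 huv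
  refine (hT.map.mono map_inl_le).insert fun b hb => ?_
  obtain ⟨v, hv, rfl⟩ := Finset.mem_map.1 hb
  exact partiteCone_adj_inr_inl.2 (hi v hv).symm

end Cone

lemma sum_ncard_setOf_ne {V ι : Type*} [Fintype V] [Fintype ι] (P : V → ι) :
    ∑ i, {v | P v ≠ i}.ncard = (Fintype.card ι - 1) * Fintype.card V := by
  classical
  calc ∑ i, {v | P v ≠ i}.ncard
      = ∑ i, ∑ v, if P v ≠ i then 1 else 0 := by
        simp only [Set.ncard_eq_toFinset_card', Set.toFinset_ofPred, Finset.card_filter]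
    _ = ∑ v, ∑ i, if P v ≠ i then 1 else 0 := Finset.sum_comm
    _ = ∑ _v : V, (Fintype.card ι - 1) := Finset.sum_congr rfl fun v _ => by
        rw [← Finset.card_filter, Finset.filter_ne, Finset.card_erase_of_mem (Finset.mem_univ _),
          Finset.card_univ]
    _ = (Fintype.card ι - 1) * Fintype.card V := by simp [mul_comm]

/-- The analogue of `BetaWitness 2` on arbitrary types: `G` is a `K_{s+1}`-free multipartite graph,
with parts given by `P`, in which a `K_s` survives the deletion of any two parts `a` and `b`.
Allowing `a = b` spares a case distinction when parts are added. -/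
structure TwoPartRobust {V ι : Type*} (s : ℕ) (G : SimpleGraph V) (P : V → ι) : Prop where
  ne_of_adj : ∀ u v, G.Adj u v → P u ≠ P v
  cliqueFree : G.CliqueFree (s + 1)
  exists_isNClique : ∀ a b, ∃ T : Finset V, G.IsNClique s T ∧ ∀ v ∈ T, P v ≠ a ∧ P v ≠ b

namespace TwoPartRobust

variable {V ι κ : Type*} {s : ℕ} {H : SimpleGraph V} {P : V → ι}

lemma comp_injective [Nonempty ι] (h : TwoPartRobust s H P) {g : ι → κ} (hg : g.Injective) :
    TwoPartRobust s H (g ∘ P) where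
  ne_of_adj u v huv := hg.ne (h.ne_of_adj u v huv)
  cliqueFree := h.cliqueFree
  exists_isNClique a b := by
    have ne_of_ne_invFun : ∀ {v c}, P v ≠ g.invFun c → g (P v) ≠ c := by
      rintro v _ hv rfl
      exact hv (Function.leftInverse_invFun hg _).symm
    obtain ⟨T, hT, hTab⟩ := h.exists_isNClique (g.invFun a) (g.invFun b)
    exact ⟨T, hT, fun v hv => ⟨ne_of_ne_invFun (hTab v hv).1, ne_of_ne_invFun (hTab v hv).2⟩⟩

-- If the fresh part `c 0` survives, its vertex extends the clique. Otherwise only one deleted part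
-- meets `H`, and the new vertex in whichever of the parts `c 1`, `c 2` survives can be used.
lemma partiteCone_fin_three (h : TwoPartRobust s H P) {c : Fin 3 → ι} (hc : c.Injective)
    (hfresh : ∀ v, P v ≠ c 0) :
    TwoPartRobust (s + 1) (partiteCone H P c) (Sum.elim P c) where
  ne_of_adj := partiteCone_ne_of_adj h.ne_of_adj
  cliqueFree := partiteCone_cliqueFree h.cliqueFree
  exists_isNClique := by
    classical
    have extend : ∀ {a b : ι} (i : Fin 3) {T : Finset V}, H.IsNClique s T → c i ≠ a → c i ≠ b →
        (∀ v ∈ T, P v ≠ a ∧ P v ≠ b ∧ P v ≠ c i) →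
        ∃ T' : Finset (V ⊕ Fin 3), (partiteCone H P c).IsNClique (s + 1) T' ∧
          ∀ w ∈ T', Sum.elim P c w ≠ a ∧ Sum.elim P c w ≠ b := by
      intro a b i T hT hia hib hTab
      refine ⟨_, isNClique_insert_inr_partiteCone hT fun v hv => (hTab v hv).2.2, ?_⟩
      simp only [Finset.forall_mem_insert, Finset.forall_mem_map]
      exact ⟨⟨hia, hib⟩, fun v hv => ⟨(hTab v hv).1, (hTab v hv).2.1⟩⟩
    have exists_new_ne (b : ι) : ∃ i : Fin 3, i ≠ 0 ∧ c i ≠ b := by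
      by_contra! hall
      have : (1 : Fin 3) = 2 := hc ((hall 1 (by decide)).trans (hall 2 (by decide)).symm)
      exact absurd this (by decide)
    intro a b
    rcases eq_or_ne (c 0) a with rfl | ha
    · obtain ⟨i, hi, hib⟩ := exists_new_ne b
      obtain ⟨T, hT, hTb⟩ := h.exists_isNClique b (c i)
      exact extend i hT (hc.ne hi) hib fun v hv => ⟨hfresh v, hTb v hv⟩
    rcases eq_or_ne (c 0) b with rfl | hb
    · obtain ⟨i, hi, hia⟩ := exists_new_ne a
      obtain ⟨T, hT, hTa⟩ := h.exists_isNClique a (c i)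
      exact extend i hT hia (hc.ne hi) fun v hv => ⟨(hTa v hv).1, hfresh v, (hTa v hv).2⟩
    · obtain ⟨T, hT, hTab⟩ := h.exists_isNClique a b
      exact extend 0 hT ha hb fun v hv => ⟨(hTab v hv).1, (hTab v hv).2, hfresh v⟩

-- An edge between apexes `i` and `j` would complete a `K_{s+2}` with a `K_s` avoiding both parts.
lemma not_adj_inr_of_partiteCone_le (h : TwoPartRobust s H P)
    {G : SimpleGraph (V ⊕ ι)} (hle : partiteCone H P id ≤ G)
    (hG : G.CliqueFree (s + 2)) (i j : ι) : ¬ G.Adj (.inr i) (.inr j) := by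
  classical
  intro hij
  obtain ⟨T, hT, hTij⟩ := h.exists_isNClique i j
  have clique_j := (isNClique_insert_inr_partiteCone hT fun v hv => (hTij v hv).2).mono hle
  refine hG _ (clique_j.insert (a := .inr i) ?_)
  simp only [Finset.forall_mem_insert, Finset.forall_mem_map]
  exact ⟨hij, fun v hv => hle (partiteCone_adj_inr_inl.2 (hTij v hv).1.symm)⟩

theorem alphaWitness {V : Type} [Fintype V] {k : ℕ} {H : SimpleGraph V} {P : V → Fin k}
    (h : TwoPartRobust s H P) : AlphaWitness k (s + 2) ((k - 1) * Fintype.card V) := by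
  obtain ⟨G, hle, hG⟩ := exists_partiteSaturated_ge
    (partiteCone_ne_of_adj (c := id) h.ne_of_adj) (partiteCone_cliqueFree h.cliqueFree)
  have hindep := h.not_adj_inr_of_partiteCone_le hle hG.2.1
  have neighborSet_apex (i : Fin k) : G.neighborSet (.inr i) = Sum.inl '' {v | P v ≠ i} := by
    ext (v | j)
    · simp only [mem_neighborSet, Set.mem_image, Sum.inl.injEq, exists_eq_right]
      exact ⟨fun hadj => (hG.1 _ _ hadj).symm, fun hv => hle (partiteCone_adj_inr_inl.2 hv.symm)⟩
    · simpa using hindep i j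
  have := hG.alphaWitness (fun _ => rfl) hindep
  simp only [neighborSet_apex, Set.ncard_image_of_injective _ Sum.inl_injective] at this
  rwa [sum_ncard_setOf_ne, Fintype.card_fin] at this

end TwoPartRobust

section OddCycle

lemma two_mul_card_le_of_isIndepSet_circulantGraph {A : Type*} [AddGroup A] [Fintype A] {d : A}
    (hd : d ≠ 0) {I : Finset A} (hI : (circulantGraph {d}).IsIndepSet (I : Set A)) :
    2 * I.card ≤ Fintype.card A := by
  classical
  have disjoint_shift : Disjoint I (I.map (addLeftEmbedding d)) := by
    rw [Finset.disjoint_right]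
    intro _ hv' hv
    obtain ⟨v, hvI, rfl⟩ := Finset.mem_map.1 hv'
    have hne : v ≠ d + v := by simpa using hd
    exact hI hvI hv hne (by simp [hd])
  calc 2 * I.card = (I ∪ I.map (addLeftEmbedding d)).card := by
        rw [Finset.card_union_of_disjoint disjoint_shift, Finset.card_map, two_mul]
    _ ≤ Fintype.card A := Finset.card_le_univ _

variable {s : ℕ}

/-- The set `{a + 2, a + 4, …, a + 2s}`, which is independent in the cycle on `ZMod (2 * s + 1)`. -/
def evenTranslates (a : ZMod (2 * s + 1)) : Finset (ZMod (2 * s + 1)) :=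
  {v | v ≠ a ∧ Even (v - a).val}

lemma mem_evenTranslates {a v : ZMod (2 * s + 1)} :
    v ∈ evenTranslates a ↔ v ≠ a ∧ Even (v - a).val := by
  simp [evenTranslates]

lemma card_evenTranslates (a : ZMod (2 * s + 1)) : (evenTranslates a).card = s := by
  have val_add_sub {j : ℕ} (hj : j < s) :
      (a + (2 * (j + 1) : ℕ) - a : ZMod (2 * s + 1)).val = 2 * (j + 1) := by
    rw [add_sub_cancel_left, ZMod.val_natCast_of_lt (by omega)]
  have image_eq : (Finset.range s).image (fun j => a + ((2 * (j + 1) : ℕ) : ZMod (2 * s + 1))) =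
      evenTranslates a := by
    ext v
    simp only [Finset.mem_image, Finset.mem_range, mem_evenTranslates]
    constructor
    · rintro ⟨j, hj, rfl⟩
      rw [← sub_ne_zero, ← ZMod.val_ne_zero, val_add_sub hj]
      exact ⟨by omega, even_two_mul _⟩
    · rintro ⟨hva, m, hm⟩
      rw [← sub_ne_zero, ← ZMod.val_ne_zero] at hva
      have := ZMod.val_lt (v - a)
      refine ⟨m - 1, by omega, ?_⟩
      rw [show 2 * (m - 1 + 1) = (v - a).val by omega, ZMod.natCast_zmod_val, add_sub_cancel]
  rw [← image_eq, Finset.card_image_of_injOn, Finset.card_range]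
  intro i hi j hj hij
  have val_eq := congrArg (fun v => (v - a).val) hij
  beta_reduce at val_eq
  rw [val_add_sub (Finset.mem_range.1 hi), val_add_sub (Finset.mem_range.1 hj)] at val_eq
  omega

lemma add_one_notMem_evenTranslates {a v : ZMod (2 * s + 1)} (hv : v ∈ evenTranslates a) :
    v + 1 ∉ evenTranslates a := by
  obtain ⟨hva, m, hm⟩ := mem_evenTranslates.1 hv
  rw [← sub_ne_zero, ← ZMod.val_ne_zero] at hva
  have val_lt := ZMod.val_lt (v - a)
  have val_one : (1 : ZMod (2 * s + 1)).val = 1 := ZMod.val_one'' (by omega)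
  rw [mem_evenTranslates, ← sub_ne_zero, ← ZMod.val_ne_zero, add_sub_right_comm]
  rintro ⟨hne, n, hn⟩
  rcases lt_or_ge ((v - a).val + (1 : ZMod (2 * s + 1)).val) (2 * s + 1) with hlt | hge
  · have := ZMod.val_add_of_lt hlt
    omega
  · have := ZMod.val_add_of_le hge
    omega

-- If both vertices lay in each other's sets, the even numbers `(a - b).val` and `(b - a).val` would
-- add up to `2 * s + 1`.
lemma notMem_evenTranslates_or_notMem (a b : ZMod (2 * s + 1)) :
    b ∉ evenTranslates a ∨ a ∉ evenTranslates b := by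
  by_contra! hmem
  obtain ⟨hba, m, hm⟩ := mem_evenTranslates.1 hmem.1
  obtain ⟨-, n, hn⟩ := mem_evenTranslates.1 hmem.2
  have : NeZero (b - a) := ⟨sub_ne_zero.2 hba⟩
  have val_swap := ZMod.val_neg_of_ne_zero (b - a)
  rw [neg_sub] at val_swap
  have := ZMod.val_lt (b - a)
  omega

lemma isIndepSet_evenTranslates (a : ZMod (2 * s + 1)) :
    (circulantGraph {(1 : ZMod (2 * s + 1))}).IsIndepSet (evenTranslates a : Set _) := by
  rintro u hu v hv - ⟨-, huv | hvu⟩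
  · rw [Set.mem_singleton_iff, sub_eq_iff_eq_add'] at huv
    exact add_one_notMem_evenTranslates hv (huv ▸ hu)
  · rw [Set.mem_singleton_iff, sub_eq_iff_eq_add'] at hvu
    exact add_one_notMem_evenTranslates hu (hvu ▸ hv)

lemma twoPartRobust_compl_oddCycle (hs : 1 ≤ s) :
    TwoPartRobust s (circulantGraph {(1 : ZMod (2 * s + 1))})ᶜ id where
  ne_of_adj _ _ huv := huv.ne
  cliqueFree := by
    have : Fact (1 < 2 * s + 1) := ⟨by omega⟩
    rw [cliqueFree_compl]
    intro I hI
    have := two_mul_card_le_of_isIndepSet_circulantGraph one_ne_zero hI.isIndepSet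
    rw [ZMod.card, hI.card_eq] at this
    omega
  exists_isNClique a b := by
    have isNClique (d : ZMod (2 * s + 1)) :
        (circulantGraph {(1 : ZMod (2 * s + 1))})ᶜ.IsNClique s (evenTranslates d) :=
      (isNClique_compl _).2 ⟨isIndepSet_evenTranslates d, card_evenTranslates d⟩
    have ne_self {d v : ZMod (2 * s + 1)} (hv : v ∈ evenTranslates d) : v ≠ d :=
      (mem_evenTranslates.1 hv).1
    rcases notMem_evenTranslates_or_notMem a b with hb | ha
    · exact ⟨_, isNClique a, fun v hv => ⟨ne_self hv, ne_of_mem_of_not_mem hv hb⟩⟩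
    · exact ⟨_, isNClique b, fun v hv => ⟨ne_of_mem_of_not_mem hv ha, ne_self hv⟩⟩

end OddCycle

lemma exists_twoPartRobust {t : ℕ} (ht : 1 ≤ t) {m k : ℕ} (hk : 2 * t + 1 + m ≤ k) :
    ∃ (V : Type) (_ : Fintype V) (G : SimpleGraph V) (P : V → Fin k),
      Fintype.card V = 2 * t + 1 + 3 * m ∧ TwoPartRobust (t + m) G P := by
  induction m generalizing k with
  | zero =>
    obtain ⟨g⟩ : Nonempty (ZMod (2 * t + 1) ↪ Fin k) :=
      Function.Embedding.nonempty_of_card_le (by simpa using hk)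
    exact ⟨_, inferInstance, _, g ∘ id, by simp,
      (twoPartRobust_compl_oddCycle ht).comp_injective g.injective⟩
  | succ m ih =>
    obtain ⟨k, rfl⟩ : ∃ l, k = l + 1 := ⟨k - 1, by omega⟩
    obtain ⟨V, _, G, P, hcard, hG⟩ := ih (k := k) (by omega)
    have : NeZero k := ⟨by omega⟩
    have hthree : 3 ≤ k + 1 := by omega
    refine ⟨V ⊕ Fin 3, inferInstance, _, _, by simp [hcard]; ring,
      (hG.comp_injective (Fin.succ_injective k)).partiteCone_fin_three
        (Fin.castLE_injective hthree) ?_⟩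
    intro v
    exact Fin.succ_ne_zero _

theorem exists_alphaWitness {t m k : ℕ} (ht : 1 ≤ t) (hk : 2 * t + 1 + m ≤ k) :
    AlphaWitness k (t + m + 2) ((k - 1) * (2 * t + 1 + 3 * m)) := by
  obtain ⟨V, _, G, P, hcard, hG⟩ := exists_twoPartRobust ht hk
  exact hcard ▸ hG.alphaWitness

theorem stmt_12 (k r : ℕ) (hr : 3 ≤ r) (hkr : r ≤ k) :
    k * (2 * r - 4) ≤ alpha k r ∧
    (k ≤ 2 * r - 3 → alpha k r ≤ (k - 1) * (4 * r - k - 6)) ∧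
    (2 * r - 3 ≤ k → alpha k r ≤ (k - 1) * (2 * r - 3)) := by
  have witness_small (hk : k ≤ 2 * r - 3) : AlphaWitness k r ((k - 1) * (4 * r - k - 6)) := by
    convert exists_alphaWitness (t := k + 1 - r) (m := 2 * r - 3 - k) (k := k) ?_ ?_ using 2
      <;> omega
  have witness_large (hk : 2 * r - 3 ≤ k) : AlphaWitness k r ((k - 1) * (2 * r - 3)) := by
    convert exists_alphaWitness (t := r - 2) (m := 0) (k := k) ?_ ?_ using 2 <;> omega
  refine ⟨?_, fun hk => Nat.sInf_le (witness_small hk), fun hk => Nat.sInf_le (witness_large hk)⟩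
  have witness_alpha : AlphaWitness k r (alpha k r) :=
    Nat.sInf_mem (s := {m | AlphaWitness k r m}) <| (le_total k (2 * r - 3)).elim
      (fun hk => ⟨_, witness_small hk⟩) (fun hk => ⟨_, witness_large hk⟩)
  obtain ⟨s, rfl⟩ : ∃ s, r = s + 2 := ⟨r - 2, by omega⟩
  rw [show 2 * (s + 2) - 4 = 2 * s by omega]
  exact mul_two_mul_le_of_alphaWitness (by omega) witness_alpha
end

section
/- For every r ≥ 4, α(r, r) ≥ r(2r - 4) + 1. That is, there is no K_r-partite-saturated r-partite graph containing an independent transversal X (one vertex per part) with exactly r(2r-4) edges between X and its complement. -/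
open SimpleGraph

/-!
Let `x i` be the vertices of the independent transversal. Saturation of the pair `x i`, `x q` yields
a clique with one vertex in every part other than `i` and `q`, contained in both neighbourhoods.
Hence the neighbourhood of `x i` contains, for every `q ≠ i`, a clique missing only the part `q`,
but no clique meeting all `r - 1` parts. If it has fewer than `2 (r - 1)` vertices, some part
contains just one of them; deleting this part and the non-neighbours of its vertex shows by
induction that there are at least `2 r - 4` vertices. In the case of equality they are the darts of
a tree `T i` on the parts other than `i`, and the clique missing `q` consists of the darts that
point towards `q`.

Suppose that equality holds for all `i`. The trees `T i` and `T q` share the clique coming from the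
pair `x i`, `x q`, and by saturation a dart of `T j` that also occurs in `T i` as the dart between
the same two parts brings its reverse along. Let `b` be a leaf of `T a`. A walk towards `a`,
changing trees along the way, shows that `a b` is an edge of some `T j`, and then of all `T k`, with
the same two darts. If `b` and `c` are two leaves of `T a` and `i` is a fourth part, the edges `a b`
and `a c` of `T i` therefore have the same dart at `a`, which is absurd.
-/

namespace TransversalSaturation

variable {ι V : Type*} {G : SimpleGraph V} {P : V → ι} {H : Set V} {S : Set ι}

/-- `f` picks one vertex of `H` in each part of `S`, and these vertices form a clique of `G`.
The values of `f` outside `S` are irrelevant. -/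
structure IsTransversalClique (G : SimpleGraph V) (P : V → ι) (H : Set V) (S : Set ι)
    (f : ι → V) : Prop where
  mem : ∀ a ∈ S, f a ∈ H
  part : ∀ a ∈ S, P (f a) = a
  adj : S.Pairwise fun a b ↦ G.Adj (f a) (f b)

namespace IsTransversalClique

variable {f : ι → V}

theorem mono {T : Set ι} (hf : IsTransversalClique G P H S f) (h : T ⊆ S) :
    IsTransversalClique G P H T f where
  mem a ha := hf.mem a (h ha)
  part a ha := hf.part a (h ha)
  adj := hf.adj.mono h

theorem mono_mem {H' : Set V} (hf : IsTransversalClique G P H S f) (h : H ⊆ H') :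
    IsTransversalClique G P H' S f where
  mem a ha := h (hf.mem a ha)
  part := hf.part
  adj := hf.adj

theorem inter_neighborSet {p : ι} (hf : IsTransversalClique G P H S f) (hp : p ∈ S) :
    IsTransversalClique G P (H ∩ G.neighborSet (f p)) (S \ {p}) f where
  mem a ha := ⟨hf.mem a ha.1, hf.adj hp ha.1 (Ne.symm ha.2)⟩
  part a ha := hf.part a ha.1
  adj := hf.adj.mono Set.sdiff_subset

theorem exists_of_sdiff_singleton {p : ι} {u : V} (hf : IsTransversalClique G P H (S \ {p}) f)
    (hu : u ∈ H) (hup : P u = p) (hadj : ∀ a ∈ S \ {p}, G.Adj u (f a)) :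
    ∃ g, IsTransversalClique G P H S g := by
  classical
  refine ⟨Function.update f p u, ⟨fun a ha ↦ ?_, fun a ha ↦ ?_, fun a ha b hb hab ↦ ?_⟩⟩
  · obtain rfl | hap := eq_or_ne a p
    · simpa using hu
    · simpa [hap] using hf.mem a ⟨ha, hap⟩
  · obtain rfl | hap := eq_or_ne a p
    · simpa using hup
    · simpa [hap] using hf.part a ⟨ha, hap⟩
  · obtain rfl | hap := eq_or_ne a p
    · simpa [hab.symm] using hadj b ⟨hb, hab.symm⟩
    obtain rfl | hbp := eq_or_ne b p
    · simpa [hab] using (hadj a ⟨ha, hab⟩).symm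
    · simpa [hap, hbp] using hf.adj ⟨ha, hap⟩ ⟨hb, hbp⟩ hab

theorem not_cliqueFree [Fintype ι] (hf : IsTransversalClique G P H Set.univ f) :
    ¬ G.CliqueFree (Fintype.card ι) :=
  let φ : completeGraph ι →g G := ⟨f, fun h ↦ hf.adj trivial trivial h⟩
  (isNClique_map_copy_top (φ.toCopy φ.injective_of_top_hom)).not_cliqueFree

end IsTransversalClique

theorem exists_isTransversalClique_of_isNClique [Fintype ι] (hP : ∀ u v, G.Adj u v → P u ≠ P v)
    {T : Finset V} (hT : G.IsNClique (Fintype.card ι) T) :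
    ∃ f, IsTransversalClique G P T Set.univ f := by
  classical
  have hinj : Set.InjOn P T := fun u hu v hv huv ↦
    by_contra fun hne ↦ hP u v (hT.isClique hu hv hne) huv
  have himage : T.image P = Finset.univ :=
    Finset.eq_univ_of_card _ ((Finset.card_image_of_injOn hinj).trans hT.card_eq)
  have hsurj (a : ι) : ∃ v ∈ T, P v = a := by
    simpa only [← himage, Finset.mem_image] using Finset.mem_univ a
  choose f hfT hfP using hsurj
  exact ⟨f, fun a _ ↦ hfT a, fun a _ ↦ hfP a, fun a _ b _ hab ↦
    hT.isClique (hfT a) (hfT b) fun h ↦ hab (by rw [← hfP a, h, hfP b])⟩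

/-! ### Critical families and their trees -/

/-- A family of cliques of `G` inside `H`, one for each part `q ∈ S`: the clique `y q` has exactly
one vertex in each part of `S` other than `q`. Moreover no clique inside `H` meets all parts of
`S`. In a `K_r`-saturated graph the neighbourhood of each vertex of an independent transversal
carries such a family. -/
structure IsCriticalFamily (G : SimpleGraph V) (P : V → ι) (H : Set V) (S : Set ι)
    (y : ι → ι → V) : Prop where
  isClique : ∀ q ∈ S, IsTransversalClique G P H (S \ {q}) (y q)
  not_isClique : ∀ f, ¬ IsTransversalClique G P H S f

/-- The part `p` of a critical family contains a single vertex `y l p` of `H`, and this vertex is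
not adjacent to the vertex `y p l`. In the tree of `IsTreeLike`, `p` is a leaf attached to `l`. -/
structure IsPendant (G : SimpleGraph V) (P : V → ι) (H : Set V) (S : Set ι) (y : ι → ι → V)
    (p l : ι) : Prop where
  mem : p ∈ S
  mem_sdiff : l ∈ S \ {p}
  eq_of_part : ∀ z ∈ H, P z = p → z = y l p
  not_adj : ¬ G.Adj (y l p) (y p l)

/-- The parts `a` and `b` span an edge of the tree of `IsTreeLike`: the dart at `a` towards `b` and
the dart at `b` towards `a` are not adjacent in `G`. -/
def IsTreeEdge (G : SimpleGraph V) (y : ι → ι → V) (a b : ι) : Prop :=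
  ¬ G.Adj (y b a) (y a b)

/-- The part `b` is a leaf of the tree of `IsTreeLike`: it is the source of a single dart. -/
def IsLeaf (S : Set ι) (y : ι → ι → V) (b : ι) : Prop :=
  ∀ q ∈ S \ {b}, ∀ q' ∈ S \ {b}, y q b = y q' b

/-- The extremal critical families are described by a tree on the set of parts `S`: the vertices of
`H` are its darts, a dart lying in the part of its source, and `y q a` is the dart at `a` that
points towards `q`. The fields record the properties of the tree in terms of `y`. -/
structure IsTreeLike (G : SimpleGraph V) (P : V → ι) (H : Set V) (S : Set ι)
    (y : ι → ι → V) : Prop extends IsCriticalFamily G P H S y where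
  exists_eq : ∀ z ∈ H, P z ∈ S ∧ ∃ q ∈ S \ {P z}, y q (P z) = z
  eq_or_eq : ∀ q ∈ S, ∀ a ∈ S, ∀ b ∈ S, q ≠ a → q ≠ b → a ≠ b →
    y q a = y b a ∨ y q b = y a b
  exists_isTreeEdge : ∀ a ∈ S, ∀ b ∈ S, a ≠ b → ∃ c ∈ S \ {b}, y c b = y a b ∧ IsTreeEdge G y c b
  exists_isLeaf_ne : ∀ l ∈ S, S ≠ {l} → ∃ b ∈ S \ {l}, IsLeaf S y b
  eqOn_of_isClique : ∀ q ∈ S, ∀ f, IsTransversalClique G P H (S \ {q}) f →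
    Set.EqOn f (y q) (S \ {q})

variable {y : ι → ι → V} {p l : ι}

namespace IsCriticalFamily

theorem exists_not_adj {u : V} {f : ι → V} (hy : IsCriticalFamily G P H S y) (hu : u ∈ H)
    (hf : IsTransversalClique G P H (S \ {P u}) f) : ∃ m ∈ S \ {P u}, ¬ G.Adj u (f m) := by
  by_contra! hadj
  obtain ⟨g, hg⟩ := hf.exists_of_sdiff_singleton hu rfl hadj
  exact hy.not_isClique g hg

theorem exists_isPendant (hy : IsCriticalFamily G P H S y) (hS : S.Finite) (hH : H.Finite)
    (hnt : S.Nontrivial) (hcard : H.ncard < 2 * S.ncard) : ∃ p l, IsPendant G P H S y p l := by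
  classical
  obtain ⟨p, hp, huniq⟩ : ∃ p ∈ S, ∀ z ∈ H, ∀ z' ∈ H, P z = p → P z' = p → z = z' := by
    lift S to Finset ι using hS
    lift H to Finset V using hH
    rw [Set.ncard_coe_finset, Set.ncard_coe_finset, mul_comm] at hcard
    obtain ⟨p, hp, hlt⟩ := Finset.exists_card_fiber_lt_of_card_lt_mul (f := P) hcard
    refine ⟨p, hp, fun z hz z' hz' hzp hzp' ↦ ?_⟩
    exact Finset.card_le_one.1 (Nat.lt_succ_iff.1 hlt) z (by simp_all) z' (by simp_all)
  obtain ⟨q, hq, hqp⟩ := hnt.exists_ne p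
  have hmem {m : ι} (hm : m ∈ S \ {p}) : y m p ∈ H ∧ P (y m p) = p :=
    have hpm : p ∈ S \ {m} := ⟨hp, Ne.symm hm.2⟩
    ⟨(hy.isClique m hm.1).mem p hpm, (hy.isClique m hm.1).part p hpm⟩
  obtain ⟨hu, hup⟩ := hmem ⟨hq, hqp⟩
  obtain ⟨l, hl, hul⟩ := hy.exists_not_adj hu (f := y p) (by rw [hup]; exact hy.isClique p hp)
  rw [hup] at hl
  obtain ⟨hlH, hlp⟩ := hmem hl
  rw [huniq _ hu _ hlH hup hlp] at hul
  exact ⟨p, l, hp, hl, fun z hz hzp ↦ huniq z hz _ hlH hzp hlp, hul⟩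

end IsCriticalFamily

namespace IsPendant

theorem mem_and_part_eq (hp : IsPendant G P H S y p l) (hy : IsCriticalFamily G P H S y) :
    (y l p ∈ H ∧ P (y l p) = p) ∧ y p l ∈ H ∧ P (y p l) = l :=
  have hpl : p ∈ S \ {l} := ⟨hp.mem, Ne.symm hp.mem_sdiff.2⟩
  ⟨⟨(hy.isClique l hp.mem_sdiff.1).mem p hpl, (hy.isClique l hp.mem_sdiff.1).part p hpl⟩,
    (hy.isClique p hp.mem).mem l hp.mem_sdiff, (hy.isClique p hp.mem).part l hp.mem_sdiff⟩

theorem clique_apply_eq {q : ι} {f : ι → V} (hp : IsPendant G P H S y p l) (hqp : q ≠ p)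
    (hf : IsTransversalClique G P H (S \ {q}) f) : f p = y l p :=
  have hpq : p ∈ S \ {q} := ⟨hp.mem, hqp.symm⟩
  hp.eq_of_part _ (hf.mem p hpq) (hf.part p hpq)

theorem isTransversalClique_inter {q : ι} {f : ι → V} (hp : IsPendant G P H S y p l)
    (hqp : q ≠ p) (hf : IsTransversalClique G P H (S \ {q}) f) :
    IsTransversalClique G P (H ∩ G.neighborSet (y l p)) ((S \ {p}) \ {q}) f := by
  rw [← hp.clique_apply_eq hqp hf]
  exact (hf.inter_neighborSet ⟨hp.mem, hqp.symm⟩).mono fun a ha ↦ ⟨⟨ha.1.1, ha.2⟩, ha.1.2⟩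

theorem exists_not_adj {f : ι → V} (hp : IsPendant G P H S y p l)
    (hy : IsCriticalFamily G P H S y) (hf : IsTransversalClique G P H (S \ {p}) f) :
    ∃ m ∈ S \ {p}, ¬ G.Adj (y l p) (f m) := by
  obtain ⟨⟨huH, hup⟩, -⟩ := hp.mem_and_part_eq hy
  simpa only [hup] using hy.exists_not_adj huH (by rwa [hup])

theorem isCriticalFamily_inter (hp : IsPendant G P H S y p l) (hy : IsCriticalFamily G P H S y) :
    IsCriticalFamily G P (H ∩ G.neighborSet (y l p)) (S \ {p}) y where
  isClique q hq := hp.isTransversalClique_inter hq.2 (hy.isClique q hq.1)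
  not_isClique f hf := by
    obtain ⟨m, hm, hadj⟩ := hp.exists_not_adj hy (hf.mono_mem Set.inter_subset_left)
    exact hadj (hf.mem m hm).2

theorem insert_insert_subset (hp : IsPendant G P H S y p l) (hy : IsCriticalFamily G P H S y) :
    insert (y l p) (insert (y p l) (H ∩ G.neighborSet (y l p))) ⊆ H :=
  have ⟨⟨huH, _⟩, hwH, _⟩ := hp.mem_and_part_eq hy
  Set.insert_subset huH (Set.insert_subset hwH Set.inter_subset_left)

theorem ncard_insert_insert (hp : IsPendant G P H S y p l) (hy : IsCriticalFamily G P H S y)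
    (hH : H.Finite) : (insert (y l p) (insert (y p l) (H ∩ G.neighborSet (y l p)))).ncard =
      (H ∩ G.neighborSet (y l p)).ncard + 2 := by
  obtain ⟨⟨-, hup⟩, -, hwl⟩ := hp.mem_and_part_eq hy
  have hne : y l p ≠ y p l := fun h ↦ hp.mem_sdiff.2 (by rw [← hwl, ← h, hup]; rfl)
  have hfin : (H ∩ G.neighborSet (y l p)).Finite := hH.inter_of_left _
  rw [Set.ncard_insert_of_notMem _ (hfin.insert _), Set.ncard_insert_of_notMem _ hfin]
  · exact fun h ↦ hp.not_adj h.2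
  · simp [hne]

theorem ncard_inter_add_two_le (hp : IsPendant G P H S y p l) (hy : IsCriticalFamily G P H S y)
    (hH : H.Finite) : (H ∩ G.neighborSet (y l p)).ncard + 2 ≤ H.ncard :=
  hp.ncard_insert_insert hy hH ▸ Set.ncard_le_ncard (hp.insert_insert_subset hy) hH

end IsPendant

theorem IsCriticalFamily.two_mul_ncard_le (hy : IsCriticalFamily G P H S y) (hS : S.Finite)
    (hH : H.Finite) : 2 * S.ncard ≤ H.ncard + 2 := by
  induction hn : S.ncard generalizing S H with
  | zero => omega
  | succ n ih =>
    by_contra! hlt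
    have hnt : S.Nontrivial := (Set.one_lt_ncard_iff_nontrivial_and_finite.1 (by omega)).1
    obtain ⟨p, l, hp⟩ := hy.exists_isPendant hS hH hnt (by omega)
    have hle := ih (hp.isCriticalFamily_inter hy) hS.sdiff ((hH.inter_of_left _))
      (by rw [Set.ncard_sdiff_singleton_of_mem hp.mem, hn, Nat.add_sub_cancel])
    have hle' := hp.ncard_inter_add_two_le hy hH
    omega

namespace IsPendant

theorem eq_or_eq_or_adj (hp : IsPendant G P H S y p l) (hy : IsCriticalFamily G P H S y)
    (hH : H.Finite) (hcard : H.ncard = (H ∩ G.neighborSet (y l p)).ncard + 2) :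
    ∀ z ∈ H, z = y l p ∨ z = y p l ∨ G.Adj (y l p) z := by
  have hcover := Set.eq_of_subset_of_ncard_le (hp.insert_insert_subset hy)
    (by rw [hp.ncard_insert_insert hy hH, hcard]) hH
  intro z hz
  obtain h | h | h := hcover.symm ▸ hz
  exacts [.inl h, .inr (.inl h), .inr (.inr h.2)]

section Extend

variable (hp : IsPendant G P H S y p l) (hy : IsCriticalFamily G P H S y)
  (hcover : ∀ z ∈ H, z = y l p ∨ z = y p l ∨ G.Adj (y l p) z)
  (ht : IsTreeLike G P (H ∩ G.neighborSet (y l p)) (S \ {p}) y)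

include hp hy hcover ht

theorem eqOn_of_isClique_pendant {f : ι → V} (hf : IsTransversalClique G P H (S \ {p}) f) :
    f l = y p l ∧ ∀ a ∈ (S \ {p}) \ {l}, f a = y l a := by
  obtain ⟨⟨-, hup⟩, -, hwl⟩ := hp.mem_and_part_eq hy
  have hne_u {a : ι} (ha : a ∈ S \ {p}) : f a ≠ y l p := fun h ↦
    ha.2 (by rw [← hf.part a ha, h, hup]; rfl)
  have hadj {a : ι} (ha : a ∈ (S \ {p}) \ {l}) : G.Adj (y l p) (f a) := by
    obtain h | h | h := hcover _ (hf.mem a ha.1)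
    · exact absurd h (hne_u ha.1)
    · exact absurd (by rw [← hf.part a ha.1, h, hwl]; rfl) ha.2
    · exact h
  constructor
  · obtain ⟨m, hm, hnadj⟩ := hp.exists_not_adj hy hf
    obtain rfl : m = l := by_contra fun hml ↦ hnadj (hadj ⟨hm, hml⟩)
    exact ((hcover _ (hf.mem m hm)).resolve_left (hne_u hm)).resolve_right hnadj
  · have hf' := hf.mono (Set.sdiff_subset (t := {l}))
    exact ht.eqOn_of_isClique l hp.mem_sdiff f
      ⟨fun a ha ↦ ⟨hf'.mem a ha, hadj ha⟩, hf'.part, hf'.adj⟩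

theorem apply_pendant_eq {a : ι} (ha : a ∈ (S \ {p}) \ {l}) : y p a = y l a :=
  (hp.eqOn_of_isClique_pendant hy hcover ht (hy.isClique p hp.mem)).2 a ha

theorem exists_eq {z : V} (hz : z ∈ H) : P z ∈ S ∧ ∃ q ∈ S \ {P z}, y q (P z) = z := by
  obtain ⟨⟨-, hup⟩, -, hwl⟩ := hp.mem_and_part_eq hy
  obtain rfl | rfl | h := hcover z hz
  · rw [hup]
    exact ⟨hp.mem, l, hp.mem_sdiff, rfl⟩
  · rw [hwl]
    exact ⟨hp.mem_sdiff.1, p, ⟨hp.mem, Ne.symm hp.mem_sdiff.2⟩, rfl⟩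
  · obtain ⟨hzS, q, hq, hqz⟩ := ht.exists_eq z ⟨hz, h⟩
    exact ⟨hzS.1, q, ⟨hq.1.1, hq.2⟩, hqz⟩

theorem eq_or_eq {q a b : ι} (hq : q ∈ S) (ha : a ∈ S) (hb : b ∈ S) (hqa : q ≠ a) (hqb : q ≠ b)
    (hab : a ≠ b) : y q a = y b a ∨ y q b = y a b := by
  have hleaf {m : ι} (hm : m ∈ S) (hmp : m ≠ p) : y m p = y l p :=
    hp.clique_apply_eq hmp (hy.isClique m hm)
  obtain rfl | hap := eq_or_ne a p
  · exact .inl ((hleaf hq hqa).trans (hleaf hb hab.symm).symm)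
  obtain rfl | hbp := eq_or_ne b p
  · exact .inr ((hleaf hq hqb).trans (hleaf ha hab).symm)
  obtain rfl | hqp := eq_or_ne q p
  · have heq {c : ι} (hc : c ∈ S) (hcq : c ≠ q) (hcl : c ≠ l) : y q c = y l c :=
      hp.apply_pendant_eq hy hcover ht ⟨⟨hc, hcq⟩, hcl⟩
    obtain rfl | hal := eq_or_ne a l
    · exact .inr (heq hb hbp hab.symm)
    obtain rfl | hbl := eq_or_ne b l
    · exact .inl (heq ha hap hal)
    rw [heq ha hap hal, heq hb hbp hbl]
    exact ht.eq_or_eq l hp.mem_sdiff a ⟨ha, hap⟩ b ⟨hb, hbp⟩ hal.symm hbl.symm hab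
  · exact ht.eq_or_eq q ⟨hq, hqp⟩ a ⟨ha, hap⟩ b ⟨hb, hbp⟩ hqa hqb hab

theorem exists_isTreeEdge {a b : ι} (ha : a ∈ S) (hb : b ∈ S) (hab : a ≠ b) :
    ∃ c ∈ S \ {b}, y c b = y a b ∧ IsTreeEdge G y c b := by
  have hlift {a b : ι} (ha : a ∈ S \ {p}) (hb : b ∈ S \ {p}) (hab : a ≠ b) :
      ∃ c ∈ S \ {b}, y c b = y a b ∧ IsTreeEdge G y c b := by
    obtain ⟨c, hc, h⟩ := ht.exists_isTreeEdge a ha b hb hab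
    exact ⟨c, ⟨hc.1.1, hc.2⟩, h⟩
  obtain rfl | hbp := eq_or_ne b p
  · exact ⟨l, hp.mem_sdiff, (hp.clique_apply_eq hab (hy.isClique a ha)).symm,
      fun h ↦ hp.not_adj h.symm⟩
  obtain rfl | hap := eq_or_ne a p
  · obtain rfl | hbl := eq_or_ne b l
    · exact ⟨a, ⟨ha, hab⟩, rfl, hp.not_adj⟩
    · rw [hp.apply_pendant_eq hy hcover ht ⟨⟨hb, hbp⟩, hbl⟩]
      exact hlift hp.mem_sdiff ⟨hb, hbp⟩ hbl.symm
  · exact hlift ⟨ha, hap⟩ ⟨hb, hbp⟩ hab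

theorem exists_isLeaf_ne_pendant :
    ∃ b ∈ S \ {p}, IsLeaf S y b := by
  suffices ∃ b ∈ S \ {p}, ∃ v, ∀ q ∈ S \ {b}, y q b = v by
    obtain ⟨b, hb, v, h⟩ := this
    exact ⟨b, hb, fun q hq q' hq' ↦ (h q hq).trans (h q' hq').symm⟩
  by_cases hSl : S \ {p} = {l}
  · refine ⟨l, hp.mem_sdiff, y p l, fun q hq ↦ ?_⟩
    have hqp : q = p := by_contra fun hqp ↦ hq.2 (hSl ▸ (⟨hq.1, hqp⟩ : q ∈ S \ {p}))
    rw [hqp]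
  · obtain ⟨b, hb, hleaf⟩ := ht.exists_isLeaf_ne l hp.mem_sdiff hSl
    refine ⟨b, hb.1, y l b, fun q hq ↦ ?_⟩
    obtain rfl | hqp := eq_or_ne q p
    · exact hp.apply_pendant_eq hy hcover ht hb
    · exact hleaf q ⟨⟨hq.1, hqp⟩, hq.2⟩ l ⟨hp.mem_sdiff, Ne.symm hb.2⟩

theorem exists_isLeaf_ne (m : ι) :
    ∃ b ∈ S \ {m}, IsLeaf S y b := by
  obtain rfl | hmp := eq_or_ne m p
  · exact hp.exists_isLeaf_ne_pendant hy hcover ht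
  · refine ⟨p, ⟨hp.mem, hmp.symm⟩, fun q hq q' hq' ↦ ?_⟩
    rw [hp.clique_apply_eq hq.2 (hy.isClique q hq.1),
      hp.clique_apply_eq hq'.2 (hy.isClique q' hq'.1)]

theorem eqOn_of_isClique {q : ι} {f : ι → V} (hq : q ∈ S)
    (hf : IsTransversalClique G P H (S \ {q}) f) : Set.EqOn f (y q) (S \ {q}) := by
  intro a ha
  obtain rfl | hqp := eq_or_ne q p
  · obtain ⟨hfl, hfa⟩ := hp.eqOn_of_isClique_pendant hy hcover ht hf
    obtain rfl | hal := eq_or_ne a l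
    · exact hfl
    · rw [hfa a ⟨ha, hal⟩, hp.apply_pendant_eq hy hcover ht ⟨ha, hal⟩]
  obtain rfl | hap := eq_or_ne a p
  · rw [hp.clique_apply_eq hqp hf, hp.clique_apply_eq hqp (hy.isClique q hq)]
  · exact ht.eqOn_of_isClique q ⟨hq, hqp⟩ f (hp.isTransversalClique_inter hqp hf)
      ⟨⟨ha.1, hap⟩, ha.2⟩

theorem isTreeLike : IsTreeLike G P H S y where
  toIsCriticalFamily := hy
  exists_eq _ := hp.exists_eq hy hcover ht
  eq_or_eq _ hq _ ha _ hb := hp.eq_or_eq hy hcover ht hq ha hb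
  exists_isTreeEdge _ ha _ hb := hp.exists_isTreeEdge hy hcover ht ha hb
  exists_isLeaf_ne m _ _ := hp.exists_isLeaf_ne hy hcover ht m
  eqOn_of_isClique _ hq _ hf := hp.eqOn_of_isClique hy hcover ht hq hf

end Extend

end IsPendant

theorem IsCriticalFamily.isTreeLike_singleton (hy : IsCriticalFamily G P ∅ {p} y) :
    IsTreeLike G P ∅ {p} y where
  toIsCriticalFamily := hy
  exists_eq := by simp
  eq_or_eq := by simp
  exists_isTreeEdge := by simp
  exists_isLeaf_ne := by simp
  eqOn_of_isClique := by simp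

theorem IsCriticalFamily.isTreeLike (hy : IsCriticalFamily G P H S y) (hS : S.Finite)
    (hH : H.Finite) (hcard : H.ncard + 2 = 2 * S.ncard) : IsTreeLike G P H S y := by
  induction hn : S.ncard generalizing S H with
  | zero => omega
  | succ n ih =>
    obtain hS1 | hS1 := (by omega : S.ncard = 1 ∨ 1 < S.ncard)
    · obtain ⟨p, rfl⟩ := Set.ncard_eq_one.1 hS1
      obtain rfl : H = ∅ := (Set.ncard_eq_zero hH).1 (by omega)
      exact hy.isTreeLike_singleton
    · have hnt : S.Nontrivial := (Set.one_lt_ncard_iff_nontrivial_and_finite.1 hS1).1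
      obtain ⟨p, l, hp⟩ := hy.exists_isPendant hS hH hnt (by omega)
      have hy' := hp.isCriticalFamily_inter hy
      have hH' := hH.inter_of_left (G.neighborSet (y l p))
      have hS' : (S \ {p}).ncard = n := by
        rw [Set.ncard_sdiff_singleton_of_mem hp.mem, hn, Nat.add_sub_cancel]
      have hle := hy'.two_mul_ncard_le hS.sdiff hH'
      have hle' := hp.ncard_inter_add_two_le hy hH
      exact hp.isTreeLike hy (hp.eq_or_eq_or_adj hy hH (by omega))
        (ih hy' hS.sdiff hH' (by omega) hS')

/-- The component containing `a` of the tree of `IsTreeLike` with its node `e` removed: the parts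
`q` such that the darts at `e` towards `q` and towards `a` coincide. -/
def branch (S : Set ι) (y : ι → ι → V) (e a : ι) : Set ι :=
  {q ∈ S \ {e} | y q e = y a e}

theorem IsTreeEdge.symm {a b : ι} (h : IsTreeEdge G y a b) : IsTreeEdge G y b a :=
  fun hadj ↦ h hadj.symm

namespace IsTreeLike

theorem exists_two_isLeaf (ht : IsTreeLike G P H S y) (hS : S.Nontrivial) :
    ∃ b ∈ S, ∃ c ∈ S, b ≠ c ∧ IsLeaf S y b ∧ IsLeaf S y c := by
  obtain ⟨l, hl⟩ := hS.nonempty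
  obtain ⟨b, hb, hb_leaf⟩ := ht.exists_isLeaf_ne l hl hS.ne_singleton
  obtain ⟨c, hc, hc_leaf⟩ := ht.exists_isLeaf_ne b hb.1 hS.ne_singleton
  exact ⟨b, hb.1, c, hc.1, Ne.symm hc.2, hb_leaf, hc_leaf⟩

theorem eq_of_isTreeEdge {b c d : ι} (ht : IsTreeLike G P H S y) (hb : b ∈ S) (hc : c ∈ S \ {b})
    (hd : d ∈ S \ {b}) (hbc : IsTreeEdge G y b c) (hbd : IsTreeEdge G y b d)
    (heq : y c b = y d b) : c = d := by
  have hadj {q a : ι} (hq : q ∈ S \ {b}) (ha : a ∈ S \ {b}) (haq : a ≠ q) :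
      G.Adj (y q b) (y q a) :=
    (ht.isClique q hq.1).adj ⟨hb, Ne.symm hq.2⟩ ⟨ha.1, haq⟩ (Ne.symm ha.2)
  by_contra hcd
  obtain h | h := ht.eq_or_eq b hb c hc.1 d hd.1 (Ne.symm hc.2) (Ne.symm hd.2) hcd
  · exact hbc (by rw [h, heq]; exact hadj hd hc hcd)
  · exact hbd (by rw [h, ← heq]; exact hadj hc hd (Ne.symm hcd))

theorem apply_eq_of_ne {e d a : ι} (ht : IsTreeLike G P H S y) (he : e ∈ S) (hd : d ∈ S)
    (ha : a ∈ S) (hed : e ≠ d) (hea : e ≠ a) (hda : d ≠ a) (hne : y e d ≠ y a d) :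
    y d e = y a e :=
  ((ht.eq_or_eq a ha e he d hd hea.symm hda.symm hed).resolve_right hne.symm).symm

theorem apply_eq_of_ne_of_ne {c e d a : ι} (ht : IsTreeLike G P H S y) (hc : c ∈ S) (he : e ∈ S)
    (hd : d ∈ S) (ha : a ∈ S) (hcd : c ≠ d) (hed : e ≠ d) (hea : e ≠ a) (hda : d ≠ a)
    (hne : y e d ≠ y a d) (hce : e = c ∨ y c e ≠ y a e) : y c d = y e d := by
  obtain rfl | hec := eq_or_ne e c
  · rfl
  exact (ht.eq_or_eq c hc e he d hd hec.symm hcd hed).resolve_left fun h ↦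
    hce.resolve_left hec (h.trans (ht.apply_eq_of_ne he hd ha hed hea hda hne))

theorem branch_ssubset {e d a : ι} (ht : IsTreeLike G P H S y) (he : e ∈ S) (hd : d ∈ S)
    (ha : a ∈ S) (hed : e ≠ d) (hea : e ≠ a) (hda : d ≠ a) (hne : y e d ≠ y a d) :
    branch S y d a ⊂ branch S y e a := by
  have hd_mem : y d e = y a e := ht.apply_eq_of_ne he hd ha hed hea hda hne
  refine ⟨fun q hq ↦ ?_, fun h ↦ (h ⟨⟨hd, hed.symm⟩, hd_mem⟩).1.2 rfl⟩
  have hqe : q ≠ e := by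
    rintro rfl
    exact hne hq.2
  refine ⟨⟨hq.1.1, hqe⟩, ?_⟩
  obtain h | h := ht.eq_or_eq q hq.1.1 e he d hd hqe hq.1.2 hed
  · exact h.trans hd_mem
  · exact absurd (h.symm.trans hq.2) hne

end IsTreeLike

/-! ### Coherent systems of trees -/

/-- A system of trees, the `i`-th one on the parts other than `i`, as it arises from the
neighbourhoods `N i` of the vertices `x i` of an independent transversal when each of them is
extremal: `Y i q` is then the common clique of `x i` and `x q` on the other parts. -/
structure IsCoherent (G : SimpleGraph V) (P : V → ι) (N : ι → Set V) (Y : ι → ι → ι → V) :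
    Prop where
  isTreeLike : ∀ i, IsTreeLike G P (N i) {i}ᶜ (Y i)
  apply_comm : ∀ i q a, i ≠ q → a ≠ i → a ≠ q → Y i q a = Y q i a
  adj_of_notMem : ∀ i v, P v ≠ i → v ∉ N i → ∀ c, c ≠ i → c ≠ P v → G.Adj v (Y i (P v) c)

/-- The parts `e` that a walk starting at `c` may visit: other than `c` itself, only those such that
`b` separates `c` from `a` in the `e`-th tree and `e` separates `c` from `a` in the `b`-th tree. -/
def IsDetour (Y : ι → ι → ι → V) (a b c e : ι) : Prop :=
  (e ≠ a ∧ e ≠ b) ∧ (e = c ∨ Y e c b ≠ Y e a b ∧ Y b c e ≠ Y b a e)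

namespace IsCoherent

variable {N : ι → Set V} {Y : ι → ι → ι → V} {a b c e i j k : ι}

theorem adj_apply (h : IsCoherent G P N Y) {q : ι} (hqi : q ≠ i) (hai : a ≠ i) (hbi : b ≠ i)
    (haq : a ≠ q) (hbq : b ≠ q) (hab : a ≠ b) : G.Adj (Y i q a) (Y i q b) :=
  ((h.isTreeLike i).isClique q hqi).adj ⟨hai, haq⟩ ⟨hbi, hbq⟩ hab

theorem apply_eq_of_isTreeEdge (h : IsCoherent G P N Y) (hab : a ≠ b) (hai : a ≠ i) (hbi : b ≠ i)
    (haj : a ≠ j) (hbj : b ≠ j) (hedge : IsTreeEdge G (Y j) a b) (heq : Y i a b = Y j a b) :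
    Y i b a = Y j b a := by
  have hpart : P (Y j b a) = a := ((h.isTreeLike j).isClique b hbj).part a ⟨haj, hab⟩
  have hmem : Y j b a ∈ N i := by
    by_contra hnot
    have := h.adj_of_notMem i _ (hpart.symm ▸ hai) hnot b hbi (hpart.symm ▸ hab.symm)
    rw [hpart, heq] at this
    exact hedge this
  obtain ⟨q, hq, hqa⟩ := ((h.isTreeLike i).exists_eq _ hmem).2
  rw [hpart] at hq hqa
  obtain rfl | hqb := eq_or_ne q b
  · exact hqa
  obtain hq' | hq' := (h.isTreeLike i).eq_or_eq q hq.1 a hai b hbi hq.2 hqb hab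
  · exact hq'.symm.trans hqa
  · refine absurd ?_ hedge
    rw [← hqa, ← heq, ← hq']
    exact h.adj_apply hq.1 hai hbi (Ne.symm hq.2) hqb.symm hab

theorem apply_eq_iff_of_isTreeEdge (h : IsCoherent G P N Y) (hab : a ≠ b) (hai : a ≠ i)
    (hbi : b ≠ i) (haj : a ≠ j) (hbj : b ≠ j) (hedge : IsTreeEdge G (Y j) a b) :
    Y i a b = Y j a b ↔ Y i b a = Y j b a :=
  ⟨h.apply_eq_of_isTreeEdge hab hai hbi haj hbj hedge,
    h.apply_eq_of_isTreeEdge hab.symm hbi hai hbj haj hedge.symm⟩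

theorem isTreeEdge_of_apply_eq (h : IsCoherent G P N Y) (hab : a ≠ b) (hai : a ≠ i)
    (hbi : b ≠ i) (haj : a ≠ j) (hbj : b ≠ j) (hedge : IsTreeEdge G (Y j) a b)
    (heq : Y i a b = Y j a b) : IsTreeEdge G (Y i) a b := by
  rwa [IsTreeEdge, heq, h.apply_eq_of_isTreeEdge hab hai hbi haj hbj hedge heq]

theorem exists_branch_ssubset_of_isDetour (h : IsCoherent G P N Y) (hab : a ≠ b) (hca : c ≠ a)
    (hcb : c ≠ b) (hc : ∀ d, d ≠ a → d ≠ b → IsTreeEdge G (Y a) d b → d = c)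
    (hno_edge : ∀ j, j ≠ a → j ≠ b → ¬ IsTreeEdge G (Y j) a b) (he : IsDetour Y a b c e) :
    ∃ d, IsDetour Y a b c d ∧ branch {b}ᶜ (Y b) d a ⊂ branch {b}ᶜ (Y b) e a := by
  obtain ⟨⟨hea, heb⟩, he⟩ := he
  -- in the `e`-th tree, `d` is the neighbour of `b` on the path from `b` to `a`
  obtain ⟨d, ⟨hde, hdb⟩, hdir, hedge⟩ :=
    (h.isTreeLike e).exists_isTreeEdge a hea.symm b heb.symm hab
  replace hde : d ≠ e := hde
  replace hdb : d ≠ b := hdb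
  have hda : d ≠ a := by
    rintro rfl
    exact hno_edge e hea heb hedge
  have hdc : d ≠ c := by
    rintro rfl
    obtain he | he := he
    exacts [hde he.symm, he.1 hdir]
  have happly {i : ι} (hdi : d ≠ i) (hbi : b ≠ i) : Y i d b = Y e d b ↔ Y i b d = Y e b d :=
    h.apply_eq_iff_of_isTreeEdge hdb hdi hbi hde heb.symm hedge
  have hne_edge : Y a d b ≠ Y e d b := fun heq ↦
    hdc (hc d hda hdb (h.isTreeEdge_of_apply_eq hdb hda hab.symm hde heb.symm hedge heq))
  have hsep : Y b e d ≠ Y b a d := by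
    rw [h.apply_comm b e d heb.symm hdb hde, h.apply_comm b a d hab.symm hdb hda]
    exact fun heq ↦ hne_edge ((happly hda hab.symm).2 heq.symm)
  have hbranch : branch {b}ᶜ (Y b) d a ⊂ branch {b}ᶜ (Y b) e a :=
    (h.isTreeLike b).branch_ssubset heb hdb hab hde.symm hea hda hsep
  have hdir_c : Y b c d = Y b e d :=
    (h.isTreeLike b).apply_eq_of_ne_of_ne hcb heb hdb hab hdc.symm hde.symm hea hda hsep
      (he.imp_right And.right)
  refine ⟨d, ⟨⟨hda, hdb⟩, .inr ⟨?_, hdir_c ▸ hsep⟩⟩, hbranch⟩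
  rw [h.apply_comm d c b hdc hdb.symm hcb.symm, h.apply_comm d a b hda hdb.symm hab.symm,
    (happly hdc hcb.symm).2 (by rw [h.apply_comm c b d hcb hdc hdb, hdir_c,
      h.apply_comm b e d heb.symm hdb hde])]
  exact hne_edge.symm

theorem exists_isTreeEdge_of_isLeaf [Finite ι] (h : IsCoherent G P N Y) (hab : a ≠ b) {q : ι}
    (hqa : q ≠ a) (hqb : q ≠ b) (hleaf : IsLeaf {a}ᶜ (Y a) b) :
    ∃ j, j ≠ a ∧ j ≠ b ∧ IsTreeEdge G (Y j) a b := by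
  by_contra! hno_edge
  obtain ⟨c, ⟨hca, hcb⟩, -, hcedge⟩ := (h.isTreeLike a).exists_isTreeEdge q hqa b hab.symm hqb
  have hc (d : ι) (hda : d ≠ a) (hdb : d ≠ b) (hd : IsTreeEdge G (Y a) d b) : d = c :=
    (h.isTreeLike a).eq_of_isTreeEdge hab.symm ⟨hda, hdb⟩ ⟨hca, hcb⟩ hd.symm hcedge.symm
      (hleaf d ⟨hda, hdb⟩ c ⟨hca, hcb⟩)
  obtain ⟨e, he⟩ := exists_minimalFor_of_wellFoundedLT (IsDetour Y a b c)
    (fun e ↦ branch {b}ᶜ (Y b) e a) ⟨c, ⟨hca, hcb⟩, .inl rfl⟩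
  obtain ⟨d, hd, hlt⟩ := h.exists_branch_ssubset_of_isDetour hab hca hcb hc hno_edge he.prop
  exact he.not_prop_of_lt hlt hd

theorem isTreeEdge_and_apply_eq_of_isLeaf [Finite ι] (h : IsCoherent G P N Y) (hab : a ≠ b)
    (hleaf : IsLeaf {a}ᶜ (Y a) b) (hia : i ≠ a) (hib : i ≠ b) (hka : k ≠ a) (hkb : k ≠ b) :
    IsTreeEdge G (Y i) a b ∧ Y i b a = Y k b a := by
  obtain ⟨j, hja, hjb, hj⟩ := h.exists_isTreeEdge_of_isLeaf hab hia hib hleaf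
  have hdir {m : ι} (hma : m ≠ a) (hmb : m ≠ b) : Y m a b = Y j a b := by
    rw [h.apply_comm m a b hma hmb.symm hab.symm, h.apply_comm j a b hja hjb.symm hab.symm]
    exact hleaf m ⟨hma, hmb⟩ j ⟨hja, hjb⟩
  have hrev {m : ι} (hma : m ≠ a) (hmb : m ≠ b) : Y m b a = Y j b a :=
    h.apply_eq_of_isTreeEdge hab hma.symm hmb.symm hja.symm hjb.symm hj (hdir hma hmb)
  exact ⟨h.isTreeEdge_of_apply_eq hab hia.symm hib.symm hja.symm hjb.symm hj (hdir hia hib),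
    (hrev hia hib).trans (hrev hka hkb).symm⟩

theorem card_le_three [Fintype ι] (h : IsCoherent G P N Y) : Fintype.card ι ≤ 3 := by
  classical
  by_contra! hcard
  have hnt : Nontrivial ι := Fintype.one_lt_card_iff_nontrivial.1 (by omega)
  obtain ⟨a⟩ := hnt.to_nonempty
  have hS : ({a}ᶜ : Set ι).Nontrivial := by
    rw [← Set.one_lt_ncard_iff_nontrivial, Set.ncard_compl, Set.ncard_singleton,
      Nat.card_eq_fintype_card]
    omega
  obtain ⟨b, hb, c, hc, hbc, hb_leaf, hc_leaf⟩ := (h.isTreeLike a).exists_two_isLeaf hS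
  obtain ⟨i, -, hi⟩ := Finset.exists_mem_notMem_of_card_lt_card (s := {a, b, c})
    (t := Finset.univ) (Finset.card_le_three.trans_lt hcard)
  simp only [Finset.mem_insert, Finset.mem_singleton, not_or] at hi
  obtain ⟨hia, hib, hic⟩ := hi
  obtain ⟨hib_edge, hib_eq⟩ :=
    h.isTreeEdge_and_apply_eq_of_isLeaf (Ne.symm hb) hb_leaf hia hib hc hbc.symm
  obtain ⟨hic_edge, hic_eq⟩ :=
    h.isTreeEdge_and_apply_eq_of_isLeaf (Ne.symm hc) hc_leaf hia hic hb hbc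
  refine hbc ((h.isTreeLike i).eq_of_isTreeEdge (Ne.symm hia) ⟨Ne.symm hib, hb⟩
    ⟨Ne.symm hic, hc⟩ hib_edge hic_edge ?_)
  rw [hib_eq, hic_eq, h.apply_comm c b a hbc.symm (Ne.symm hc) (Ne.symm hb)]

end IsCoherent

/-! ### Neighbourhoods in a saturated graph -/

theorem adj_or_eq_of_adj_sup_fromEdgeSet {u v a b : V}
    (h : (G ⊔ fromEdgeSet {s(u, v)}).Adj a b) : G.Adj a b ∨ a = u ∧ b = v ∨ a = v ∧ b = u := by
  simp only [sup_adj, fromEdgeSet_adj, Set.mem_singleton_iff, Sym2.eq_iff] at h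
  exact h.imp_right And.left

/-- `f` picks `u`, `v` and one vertex in each of the other parts, in such a way that any two of
these vertices are adjacent, except possibly `u` and `v`. This is what saturation provides for a
non-adjacent pair. -/
structure IsCompletion (G : SimpleGraph V) (P : V → ι) (u v : V) (f : ι → V) : Prop where
  apply_left : f (P u) = u
  apply_right : f (P v) = v
  isClique_left : IsTransversalClique G P Set.univ {P u}ᶜ f
  isClique_right : IsTransversalClique G P Set.univ {P v}ᶜ f

namespace IsCompletion

variable {u v : V} {f : ι → V}

theorem symm (hf : IsCompletion G P u v f) : IsCompletion G P v u f :=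
  ⟨hf.apply_right, hf.apply_left, hf.isClique_right, hf.isClique_left⟩

theorem isClique_neighborSet (hf : IsCompletion G P u v f) (huv : P u ≠ P v) :
    IsTransversalClique G P (G.neighborSet u) ({P u}ᶜ \ {P v}) f := by
  have := hf.isClique_right.inter_neighborSet (p := P u) huv
  rw [Set.univ_inter, hf.apply_left] at this
  exact this.mono fun a ha ↦ ⟨ha.2, ha.1⟩

end IsCompletion

section Saturated

variable [Fintype ι] (hfree : G.CliqueFree (Fintype.card ι))

include hfree

theorem not_isTransversalClique_neighborSet (u : V) (f : ι → V) :
    ¬ IsTransversalClique G P (G.neighborSet u) {P u}ᶜ f := by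
  intro hf
  rw [Set.compl_eq_univ_sdiff] at hf
  obtain ⟨g, hg⟩ := (hf.mono_mem (Set.subset_univ _)).exists_of_sdiff_singleton
    (Set.mem_univ u) rfl hf.mem
  exact hg.not_cliqueFree hfree

theorem IsCompletion.not_adj {u v : V} {f : ι → V} (hf : IsCompletion G P u v f)
    (huv : P u ≠ P v) : ¬ G.Adj u v := by
  intro hadj
  refine not_isTransversalClique_neighborSet hfree u f
    ⟨fun a ha ↦ ?_, hf.isClique_left.part, hf.isClique_left.adj⟩
  obtain rfl | hav := eq_or_ne a (P v)
  · rwa [hf.apply_right]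
  · exact (hf.isClique_neighborSet huv).mem a ⟨ha, hav⟩

theorem exists_isCompletion (hP : ∀ u v, G.Adj u v → P u ≠ P v) {u v : V} (huv : P u ≠ P v)
    (hsat : ¬ (G ⊔ fromEdgeSet {s(u, v)}).CliqueFree (Fintype.card ι)) :
    ∃ f, IsCompletion G P u v f := by
  obtain ⟨T, hT⟩ := not_forall_not.1 hsat
  obtain ⟨f, hf⟩ := exists_isTransversalClique_of_isNClique (P := P) (fun a b h ↦ by
    obtain h | ⟨rfl, rfl⟩ | ⟨rfl, rfl⟩ := adj_or_eq_of_adj_sup_fromEdgeSet h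
    exacts [hP a b h, huv, huv.symm]) hT
  have hpart (a : ι) : P (f a) = a := hf.part a trivial
  have hcases {a b : ι} (hab : a ≠ b) :
      G.Adj (f a) (f b) ∨ f a = u ∧ f b = v ∨ f a = v ∧ f b = u :=
    adj_or_eq_of_adj_sup_fromEdgeSet (hf.adj trivial trivial hab)
  obtain ⟨a, b, ha, hb⟩ : ∃ a b, f a = u ∧ f b = v := by
    by_contra! hne
    refine IsTransversalClique.not_cliqueFree (H := Set.univ) (P := P) (f := f)
      ⟨fun _ _ ↦ trivial, fun a _ ↦ hpart a, fun a _ b _ hab ↦ ?_⟩ hfree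
    exact (hcases hab).resolve_right fun h ↦
      h.elim (fun h ↦ hne a b h.1 h.2) fun h ↦ hne b a h.2 h.1
  obtain rfl : P u = a := ha ▸ hpart a
  obtain rfl : P v = b := hb ▸ hpart b
  refine ⟨f, ha, hb, ⟨fun _ _ ↦ trivial, fun a _ ↦ hpart a, fun a ha b hb hab ↦ ?_⟩,
    ⟨fun _ _ ↦ trivial, fun a _ ↦ hpart a, fun a ha b hb hab ↦ ?_⟩⟩
  · obtain h | ⟨rfl, -⟩ | ⟨-, rfl⟩ := hcases hab
    exacts [h, (ha (hpart a).symm).elim, (hb (hpart b).symm).elim]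
  · obtain h | ⟨-, rfl⟩ | ⟨rfl, -⟩ := hcases hab
    exacts [h, (hb (hpart b).symm).elim, (ha (hpart a).symm).elim]

variable {x : ι → V} (hx : ∀ i, P (x i) = i)

include hx

theorem isCriticalFamily_neighborSet {i : ι}
    (hy : ∀ q, i ≠ q → IsCompletion G P (x i) (x q) (y q)) :
    IsCriticalFamily G P (G.neighborSet (x i)) {i}ᶜ y where
  isClique q hq := by
    have hiq : P (x i) ≠ P (x q) := by simpa only [hx] using Ne.symm hq
    simpa only [hx] using (hy q (Ne.symm hq)).isClique_neighborSet hiq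
  not_isClique f := by
    simpa only [hx] using not_isTransversalClique_neighborSet hfree (P := P) (x i) f

theorem isCoherent_of_ncard_eq {Y : ι → ι → ι → V}
    (hsat : ∀ u v, P u ≠ P v → ¬ G.Adj u v → ∃ f, IsCompletion G P u v f)
    (hy : ∀ i q, i ≠ q → IsCompletion G P (x i) (x q) (Y i q))
    (hfin : ∀ i, (G.neighborSet (x i)).Finite)
    (hcard : ∀ i, (G.neighborSet (x i)).ncard + 2 = 2 * ({i}ᶜ : Set ι).ncard) :
    IsCoherent G P (fun i ↦ G.neighborSet (x i)) Y := by
  have htree (i : ι) : IsTreeLike G P (G.neighborSet (x i)) {i}ᶜ (Y i) :=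
    (isCriticalFamily_neighborSet hfree hx (hy i)).isTreeLike (Set.toFinite _) (hfin i) (hcard i)
  have huniq {i : ι} {v : V} (hiv : i ≠ P v) {f : ι → V} (hf : IsCompletion G P (x i) v f) {a : ι}
      (hai : a ≠ i) (hav : a ≠ P v) : f a = Y i (P v) a := by
    have hclique := hf.isClique_neighborSet (by rwa [hx])
    rw [hx] at hclique
    exact (htree i).eqOn_of_isClique (P v) hiv.symm f hclique ⟨hai, hav⟩
  refine ⟨htree, fun i q a hiq hai haq ↦ ?_, fun i v hvi hv c hci hcv ↦ ?_⟩
  · simpa only [hx] using (huniq (by rwa [hx]) (hy q i hiq.symm).symm hai (by rwa [hx])).symm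
  · obtain ⟨f, hf⟩ := hsat (x i) v (by rw [hx]; exact hvi.symm) hv
    have hfc := (hf.symm.isClique_neighborSet (by rwa [hx])).mem c ⟨hcv, by rwa [hx]⟩
    rwa [huniq hvi.symm hf hci hcv] at hfc

theorem mul_lt_sum_ncard_neighborSet (hι : 4 ≤ Fintype.card ι)
    (hsat : ∀ u v, P u ≠ P v → ¬ G.Adj u v → ∃ f, IsCompletion G P u v f)
    (hind : ∀ i j, ¬ G.Adj (x i) (x j)) (hfin : ∀ i, (G.neighborSet (x i)).Finite) :
    Fintype.card ι * (2 * Fintype.card ι - 4) < ∑ i, (G.neighborSet (x i)).ncard := by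
  have hexists (i q : ι) : ∃ f, i ≠ q → IsCompletion G P (x i) (x q) f := by
    obtain rfl | hiq := eq_or_ne i q
    · exact ⟨x, fun h ↦ (h rfl).elim⟩
    · obtain ⟨f, hf⟩ := hsat (x i) (x q) (by rwa [hx, hx]) (hind i q)
      exact ⟨f, fun _ ↦ hf⟩
  choose Y hy using hexists
  have hparts (i : ι) : ({i}ᶜ : Set ι).ncard = Fintype.card ι - 1 := by
    rw [Set.ncard_compl, Set.ncard_singleton, Nat.card_eq_fintype_card]
  have hle (i : ι) : 2 * Fintype.card ι - 4 ≤ (G.neighborSet (x i)).ncard := by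
    have := (isCriticalFamily_neighborSet hfree hx (hy i)).two_mul_ncard_le (Set.toFinite _)
      (hfin i)
    rw [hparts] at this
    omega
  have hsum : Fintype.card ι * (2 * Fintype.card ι - 4) = ∑ _i : ι, (2 * Fintype.card ι - 4) := by
    rw [Finset.sum_const, Finset.card_univ, smul_eq_mul]
  rw [hsum]
  refine Finset.sum_lt_sum (fun i _ ↦ hle i) ?_
  by_contra! heq
  have hcoh := isCoherent_of_ncard_eq hfree hx hsat hy hfin fun i ↦ by
    have := heq i (Finset.mem_univ i)
    have := hle i
    rw [hparts]
    omega
  have := hcoh.card_le_three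
  omega

end Saturated

/-! ### Existence of saturated graphs with an independent transversal -/

section StartGraph

variable [DecidableEq ι]

/-- For each pair `e` of parts we take a new vertex in each of the parts outside `e`; together with
the transversal `(a, none)` these are the vertices of `startGraph`. The vertex `pairVertex e a` is
the one in part `a` of the clique completed by `e`. -/
def pairVertex (e : Sym2 ι) (a : ι) : ι × Option (Sym2 ι) :=
  (a, if a ∈ e then none else some e)

/-- For each pair `e` of distinct parts, all edges between the vertices `pairVertex e a` except the
one between the two parts in `e`. -/
def startGraph (ι : Type*) [DecidableEq ι] : SimpleGraph (ι × Option (Sym2 ι)) where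
  Adj u v := u.1 ≠ v.1 ∧ ∃ e : Sym2 ι, ¬ e.IsDiag ∧ s(u.1, v.1) ≠ e ∧
    pairVertex e u.1 = u ∧ pairVertex e v.1 = v
  symm := ⟨fun _ _ ⟨h, e, he, hne, hu, hv⟩ ↦ ⟨h.symm, e, he, Sym2.eq_swap ▸ hne, hv, hu⟩⟩
  loopless := ⟨fun _ h ↦ h.1 rfl⟩

theorem startGraph_adj_pairVertex {e : Sym2 ι} (he : ¬ e.IsDiag) {a b : ι} (hab : a ≠ b)
    (hne : s(a, b) ≠ e) : (startGraph ι).Adj (pairVertex e a) (pairVertex e b) :=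
  ⟨hab, e, he, hne, rfl, rfl⟩

theorem pairVertex_of_mem {e : Sym2 ι} {a : ι} (h : a ∈ e) : pairVertex e a = (a, none) := by
  rw [pairVertex, if_pos h]

theorem pairVertex_of_notMem {e : Sym2 ι} {a : ι} (h : a ∉ e) : pairVertex e a = (a, some e) := by
  rw [pairVertex, if_neg h]

theorem mem_of_pairVertex_eq {e : Sym2 ι} {a : ι} (h : pairVertex e a = (a, none)) : a ∈ e := by
  by_contra ha
  simp [pairVertex_of_notMem ha] at h

theorem eq_of_pairVertex_eq {e e' : Sym2 ι} {a : ι} (h : pairVertex e a = (a, some e')) :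
    e = e' := by
  by_cases ha : a ∈ e
  · simp [pairVertex_of_mem ha] at h
  · simpa [pairVertex_of_notMem ha] using h

theorem not_startGraph_adj_none (i j : ι) : ¬ (startGraph ι).Adj (i, none) (j, none) := by
  rintro ⟨hij, e, -, hne, hi, hj⟩
  exact hne ((Sym2.mem_and_mem_iff hij).1
    ⟨mem_of_pairVertex_eq hi, mem_of_pairVertex_eq hj⟩).symm

theorem startGraph_cliqueFree [Fintype ι] [Nontrivial ι] :
    (startGraph ι).CliqueFree (Fintype.card ι) := by
  intro T hT
  obtain ⟨g, hg⟩ := exists_isTransversalClique_of_isNClique (P := Prod.fst)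
    (G := startGraph ι) (fun _ _ h ↦ h.1) hT
  have hfst (a : ι) : (g a).1 = a := hg.part a trivial
  have hadj {a b : ι} (hab : a ≠ b) : (startGraph ι).Adj (g a) (g b) := hg.adj trivial trivial hab
  obtain ⟨c, e, hc⟩ : ∃ c e, g c = (c, some e) := by
    by_contra! hsome
    have hnone (a : ι) : g a = (a, none) :=
      Prod.ext (hfst a) (Option.eq_none_iff_forall_ne_some.2 fun e he ↦
        hsome a e (Prod.ext (hfst a) he))
    obtain ⟨a, b, hab⟩ := exists_pair_ne ι
    exact not_startGraph_adj_none a b (hnone a ▸ hnone b ▸ hadj hab)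
  have hpair {d : ι} (hdc : d ≠ c) : (¬ e.IsDiag ∧ c ∉ e) ∧ g d = pairVertex e d := by
    obtain ⟨-, e', he', -, hc', hd⟩ := hadj hdc.symm
    rw [hfst, hc] at hc'
    obtain rfl := eq_of_pairVertex_eq hc'
    refine ⟨⟨he', fun hmem ↦ ?_⟩, by rw [← hd, hfst]⟩
    simp [pairVertex_of_mem hmem] at hc'
  obtain ⟨d, hdc⟩ := exists_ne c
  obtain ⟨hdiag, hce⟩ := (hpair hdc).1
  induction e with | _ i j
  have hnone {a : ι} (ha : a ∈ s(i, j)) : g a = (a, none) := by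
    rw [(hpair (ne_of_mem_of_not_mem ha hce)).2, pairVertex_of_mem ha]
  refine not_startGraph_adj_none i j ?_
  rw [← hnone (Sym2.mem_mk_left i j), ← hnone (Sym2.mem_mk_right i j)]
  exact hadj hdiag

theorem startGraph_isClique_pairVertex {e : Sym2 ι} (he : ¬ e.IsDiag) {i : ι} (hi : i ∈ e) :
    IsTransversalClique (startGraph ι) Prod.fst Set.univ {i}ᶜ (pairVertex e) where
  mem _ _ := trivial
  part _ _ := rfl
  adj a ha b hb hab := startGraph_adj_pairVertex he hab fun h ↦ by
    obtain rfl | rfl := Sym2.mem_iff.1 (h ▸ hi)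
    exacts [ha rfl, hb rfl]

theorem startGraph_isCompletion {i j : ι} (hij : i ≠ j) :
    IsCompletion (startGraph ι) Prod.fst (i, none) (j, none) (pairVertex s(i, j)) where
  apply_left := pairVertex_of_mem (Sym2.mem_mk_left i j)
  apply_right := pairVertex_of_mem (Sym2.mem_mk_right i j)
  isClique_left := startGraph_isClique_pairVertex (by simpa using hij) (Sym2.mem_mk_left i j)
  isClique_right := startGraph_isClique_pairVertex (by simpa using hij) (Sym2.mem_mk_right i j)

end StartGraph

theorem IsTransversalClique.map {W : Type*} {G' : SimpleGraph W} {P' : W → ι} {f : ι → V}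
    (hf : IsTransversalClique G P H S f) (φ : G →g G') (hφ : ∀ v, P' (φ v) = P v) :
    IsTransversalClique G' P' (φ '' H) S (φ ∘ f) where
  mem a ha := Set.mem_image_of_mem φ (hf.mem a ha)
  part a ha := (hφ _).trans (hf.part a ha)
  adj _ ha _ hb hab := φ.map_adj (hf.adj ha hb hab)

theorem IsCompletion.map {W : Type*} {G' : SimpleGraph W} {P' : W → ι} {u v : V} {f : ι → V}
    (hf : IsCompletion G P u v f) (φ : G →g G') (hφ : ∀ v, P' (φ v) = P v) :
    IsCompletion G' P' (φ u) (φ v) (φ ∘ f) where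
  apply_left := by rw [hφ, Function.comp_apply, hf.apply_left]
  apply_right := by rw [hφ, Function.comp_apply, hf.apply_right]
  isClique_left := by
    rw [hφ]
    exact (hf.isClique_left.map φ hφ).mono_mem (Set.subset_univ _)
  isClique_right := by
    rw [hφ]
    exact (hf.isClique_right.map φ hφ).mono_mem (Set.subset_univ _)

theorem exists_le_partiteSaturated {k r : ℕ} {V : Type} [Finite V] {G : SimpleGraph V}
    {P : V → Fin k} (hP : ∀ u v, G.Adj u v → P u ≠ P v) (hfree : G.CliqueFree r) :
    ∃ G', G ≤ G' ∧ PartiteSaturated k r G' P := by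
  obtain ⟨G', hle, hmax⟩ := (Set.toFinite
    {G' : SimpleGraph V | (∀ u v, G'.Adj u v → P u ≠ P v) ∧ G'.CliqueFree r}).exists_le_maximal
      ⟨hP, hfree⟩
  refine ⟨G', hle, hmax.prop.1, hmax.prop.2, fun u v huv hnadj hfree' ↦ hnadj ?_⟩
  refine hmax.le_of_ge ⟨fun a b h ↦ ?_, hfree'⟩ le_sup_left ?_
  · obtain h | ⟨rfl, rfl⟩ | ⟨rfl, rfl⟩ := adj_or_eq_of_adj_sup_fromEdgeSet h
    exacts [hmax.prop.1 a b h, huv, huv.symm]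
  · exact .inr ⟨rfl, ne_of_apply_ne P huv⟩

theorem exists_alphaWitness {r : ℕ} (hr : 2 ≤ r) : ∃ m, AlphaWitness r r m := by
  have : Nontrivial (Fin r) := Fin.nontrivial_iff_two_le.2 hr
  let σ := Fintype.equivFin (Fin r × Option (Sym2 (Fin r)))
  let G₀ := (startGraph (Fin r)).map σ.toEmbedding
  let φ : startGraph (Fin r) ≃g G₀ := Iso.map σ _
  let P v := (φ.symm v).1
  have hP (u v) (h : G₀.Adj u v) : P u ≠ P v := (φ.symm.map_adj_iff.2 h).1
  have hfree : G₀.CliqueFree r := by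
    simpa using (startGraph_cliqueFree (ι := Fin r)).comap φ.symm.isContained
  obtain ⟨G, hle, hsat⟩ := exists_le_partiteSaturated hP hfree
  let ψ : startGraph (Fin r) →g G := (Hom.ofLE hle).comp φ.toHom
  have hψ (v) : P (ψ v) = v.1 := congrArg Prod.fst (φ.symm_apply_apply v)
  refine ⟨_, _, G, P, fun i ↦ ψ (i, none), hsat, fun i ↦ hψ _, fun i j hadj ↦ ?_, rfl⟩
  have hij := hsat.1 _ _ hadj
  rw [hψ, hψ] at hij
  exact ((startGraph_isCompletion hij).map ψ hψ).not_adj (by simpa using hsat.2.1)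
    (by rwa [hψ, hψ]) hadj

theorem mul_lt_of_alphaWitness {r m : ℕ} (hr : 4 ≤ r) (hm : AlphaWitness r r m) :
    r * (2 * r - 4) < m := by
  obtain ⟨n, G, P, x, ⟨hP, hfree, hsat⟩, hx, hind, rfl⟩ := hm
  have hcard : Fintype.card (Fin r) = r := Fintype.card_fin r
  have hfree' : G.CliqueFree (Fintype.card (Fin r)) := by rwa [hcard]
  have hcompl (u v) (huv : P u ≠ P v) (hadj : ¬ G.Adj u v) : ∃ f, IsCompletion G P u v f :=
    exists_isCompletion hfree' hP huv (by rw [hcard]; exact hsat u v huv hadj)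
  simpa only [hcard] using mul_lt_sum_ncard_neighborSet hfree' hx (by rwa [hcard]) hcompl hind
    fun i ↦ Set.toFinite _

end TransversalSaturation

theorem stmt_18 (r : ℕ) (hr : 4 ≤ r) : r * (2 * r - 4) + 1 ≤ alpha r r := by
  have hwitness : AlphaWitness r r (alpha r r) :=
    Nat.sInf_mem (TransversalSaturation.exists_alphaWitness (by omega))
  exact TransversalSaturation.mul_lt_of_alphaWitness hr hwitness
end
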